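/- Let D be a digraph on vertex type V and U a finite set of vertices enumerated by a duplicate-free list l. If D is acyclic, then the iterated detour D↑U is acyclic, and the bypass D↑↑U (the induced subdigraph of D↑U on V \ U) is acyclic. -/

import Mathlib

/-!
Every arc of a detour is a directed walk of length one or two in the original digraph, so a cycle
in the detour expands to a closed walk there.
-/

/-- The detour of a digraph (irreflexive relation) `A` at a vertex `v`. -/
def detour {V : Type*} (A : V → V → Prop) (v : V) : V → V → Prop :=
  fun x y => x ≠ v ∧ y ≠ v ∧ x ≠ y ∧ (A x y ∨ (A x v ∧ A v y))

section Acyclicity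

open Function Relation

variable {α β : Type*} {r s : α → α → Prop}

/-- Acyclicity of a digraph, given by its adjacency relation `r`: no nonempty directed walk returns
to its starting vertex. Loops count as cycles. -/
def IsAcyclic (r : α → α → Prop) : Prop :=
  ∀ x, ¬ TransGen r x x

theorem IsAcyclic.of_le_transGen (hr : IsAcyclic r) (hs : s ≤ TransGen r) : IsAcyclic s :=
  fun x hx ↦ hr x (TransGen.closed hs x x hx)

theorem IsAcyclic.onFun (hr : IsAcyclic r) (f : β → α) : IsAcyclic (r on f) :=
  fun x hx ↦ hr (f x) (TransGen.lift f le_rfl x x hx)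

theorem detour_le_transGen (r : α → α → Prop) (v : α) : detour r v ≤ TransGen r := by
  rintro x y ⟨-, -, -, hxy | ⟨hxv, hvy⟩⟩
  · exact .single hxy
  · exact .tail (.single hxv) hvy

protected theorem IsAcyclic.detour (hr : IsAcyclic r) (v : α) : IsAcyclic (detour r v) :=
  hr.of_le_transGen (detour_le_transGen r v)

theorem IsAcyclic.foldl_detour (hr : IsAcyclic r) (l : List α) : IsAcyclic (l.foldl detour r) :=
  l.foldlRecOn detour hr fun _ hs v _ ↦ hs.detour v

end Acyclicity

/-- If `D` is acyclic, then so are the iterated detour `D↑U` (over a duplicate-free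
enumeration `l` of the finite set `U`) and the bypass `D↑↑U` (the induced subdigraph
of `D↑U` on `V \ U`). -/
theorem detour_bypass_set_acyclic {V : Type*} [DecidableEq V]
    (A : V → V → Prop) (hA : Irreflexive A)
    (hacyc : Irreflexive (Relation.TransGen A))
    (U : Finset V) (l : List V) (hl : l.Nodup) (hmem : ∀ x, x ∈ l ↔ x ∈ U) :
    Irreflexive (Relation.TransGen (List.foldl detour A l)) ∧
      Irreflexive (Relation.TransGen
        (fun (x y : {z : V // z ∉ U}) => List.foldl detour A l x.val y.val)) := by
  have hdetour : IsAcyclic (l.foldl detour A) := IsAcyclic.foldl_detour hacyc l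
  exact ⟨hdetour, hdetour.onFun Subtype.val⟩
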